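/- arXiv:2002.05855 — 2 statements merged into one kernel-verified Lean document; each statement's English description precedes it below -/
import Mathlib

section
/- Let u ≤ w in S_n. There exists a function f : {1,…,n} → ℝ such that f(p) = f(q) whenever (p,q) ∈ E_w(u)^+ and f(p) > f(q) whenever (p,q) ∈ E_w(u)^−. -/
open Equiv

/-- The length (number of inversions) of a permutation of `Fin n`. -/
def invLen {n : ℕ} (u : Equiv.Perm (Fin n)) : ℕ :=
  (Finset.univ.filter (fun p : Fin n × Fin n => p.1 < p.2 ∧ u p.2 < u p.1)).card

/-- A permutation is a transposition if it swaps two distinct elements. -/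
def IsTransposition {n : ℕ} (σ : Equiv.Perm (Fin n)) : Prop :=
  ∃ a b : Fin n, a ≠ b ∧ σ = Equiv.swap a b

/-- Bruhat order on permutations: `v ≤ w` iff `w` is obtained from `v` by left
multiplication by transpositions, each strictly increasing the length. -/
def BruhatLE {n : ℕ} (v w : Equiv.Perm (Fin n)) : Prop :=
  ∃ (m : ℕ) (c : ℕ → Equiv.Perm (Fin n)),
    c 0 = v ∧ c m = w ∧
    ∀ k, k < m →
      (∃ τ : Equiv.Perm (Fin n), IsTransposition τ ∧ c (k + 1) = τ * c k) ∧
      invLen (c k) < invLen (c (k + 1))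

/-- The edge set `Ẽ_w(u)`. -/
def Etilde {n : ℕ} (w u : Equiv.Perm (Fin n)) : Set (Fin n × Fin n) :=
  { p | ∃ i j : Fin n, i < j ∧ p = (u i, u j) ∧
      BruhatLE (Equiv.swap (u i) (u j) * u) w ∧
      |(invLen (Equiv.swap (u i) (u j) * u) : ℤ) - (invLen u : ℤ)| = 1 }

/-- The transitive reduction `E_w(u)` of `Ẽ_w(u)`: edges `(a,b)` of `Ẽ_w(u)` such that
there is no directed path from `a` to `b` in `Ẽ_w(u)` using at least two edges. -/
def Ered {n : ℕ} (w u : Equiv.Perm (Fin n)) : Set (Fin n × Fin n) :=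
  { p | p ∈ Etilde w u ∧
      ¬ ∃ c : Fin n, (p.1, c) ∈ Etilde w u ∧
        Relation.TransGen (fun a b : Fin n => (a, b) ∈ Etilde w u) c p.2 }

/-- `E_w(u)^+`: edges `(a,b)` of `E_w(u)` with `a < b`. -/
def Eplus {n : ℕ} (w u : Equiv.Perm (Fin n)) : Set (Fin n × Fin n) :=
  { p ∈ Ered w u | p.1 < p.2 }

/-- `E_w(u)^-`: edges `(a,b)` of `E_w(u)` with `a > b`. -/
def Eminus {n : ℕ} (w u : Equiv.Perm (Fin n)) : Set (Fin n × Fin n) :=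
  { p ∈ Ered w u | p.2 < p.1 }

/-- The moment-map image `μ(u) = (u⁻¹(1), …, u⁻¹(n)) ∈ ℝⁿ`
(using values `1, …, n`, i.e. `Fin.val + 1`). -/
def mu {n : ℕ} (u : Equiv.Perm (Fin n)) : Fin n → ℝ :=
  fun k => ((u⁻¹ k : ℕ) : ℝ) + 1

/-- The standard basis vector `e_a` of `ℝⁿ`. -/
def stdB {n : ℕ} (a : Fin n) : Fin n → ℝ :=
  fun k => if k = a then 1 else 0

/-!
Plot the permutation `u` as the points `(u⁻¹ a, a)`. Every edge of `Ẽ_w(u)` points to the right, an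
increasing edge spans a rectangle with no point inside, and (since `u ≤ w`) every two points in
decreasing position are joined by a path. Let `≺` be the reachability order. If two points are
incomparable, then one lies above and to the right of the other; listing that one first extends `≺`
to a linear order, and an increasing edge of the transitive reduction joins neighbours in it. Along
the list of all values in this order, minus the number of descents met so far is therefore constant
on increasing reduced edges and strictly decreases along decreasing edges.
-/

theorem exists_step_of_reflTransGen {α : Type*} {R : α → α → Prop} {a b : α}
    (hab : Relation.ReflTransGen R a b) {p : α → Prop} (ha : ¬ p a) (hb : p b) :
    ∃ s t, Relation.ReflTransGen R a s ∧ R s t ∧ Relation.ReflTransGen R t b ∧ ¬ p s ∧ p t := by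
  induction hab using Relation.ReflTransGen.head_induction_on with
  | refl => exact absurd hb ha
  | @head a c hac hcb ih =>
    by_cases hc : p c
    · exact ⟨a, c, .refl, hac, hcb, ha, hc⟩
    · obtain ⟨s, t, hcs, hst, htb, hs, ht⟩ := ih hc
      exact ⟨s, t, .head hac hcs, hst, htb, hs, ht⟩

section DescentCount

variable {α β : Type*} [LinearOrder α] [LinearOrder β]

theorem exists_covBy_descent_of_lt [Finite α] {v : α → β} {a b : α} (hab : a < b)
    (hv : v b < v a) : ∃ s t, a ≤ s ∧ s ⋖ t ∧ t ≤ b ∧ v t < v s := by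
  have := Fintype.ofFinite α
  have := Fintype.toLocallyFiniteOrder (α := α)
  simp only [le_iff_reflTransGen_covBy]
  obtain ⟨s, t, has, hst, htb, hs, ht⟩ := exists_step_of_reflTransGen
    (le_iff_reflTransGen_covBy.1 hab.le) (p := fun y => v y ≤ v b) hv.not_ge le_rfl
  exact ⟨s, t, has, hst, htb, ht.trans_lt (not_le.1 hs)⟩

/-- The number of descents of the sequence of values `v`, listed along the linear order of `α`,
up to and including the step that arrives at `p`. -/
noncomputable def descentCount (v : α → β) (p : α) : ℕ :=
  {t | t ≤ p ∧ ∃ s, s ⋖ t ∧ v t < v s}.ncard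

theorem descentCount_eq_of_covBy {v : α → β} {a b : α} (hab : a ⋖ b) (hv : v a ≤ v b) :
    descentCount v a = descentCount v b := by
  unfold descentCount
  congr! 3 with t
  refine and_congr_left fun ⟨s, hst, hvs⟩ => ⟨fun h => h.trans hab.le, fun h => ?_⟩
  refine hab.le_of_lt (h.lt_of_ne ?_)
  rintro rfl
  exact hvs.not_ge (hst.unique_left hab ▸ hv)

theorem descentCount_lt_of_lt [Finite α] {v : α → β} {a b : α} (hab : a < b) (hv : v b < v a) :
    descentCount v a < descentCount v b := by
  obtain ⟨s, t, has, hst, htb, hvt⟩ := exists_covBy_descent_of_lt hab hv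
  refine Set.ncard_lt_ncard (Set.ssubset_iff_of_subset ?_ |>.2 ⟨t, ⟨htb, s, hst, hvt⟩, ?_⟩)
  · exact fun y hy => ⟨hy.1.trans hab.le, hy.2⟩
  · exact fun ht => (has.trans_lt hst.lt).not_ge ht.1

end DescentCount

section RectangleDigraph

open Relation

variable {α β γ : Type*} [LinearOrder β] [LinearOrder γ]

/-- A digraph on points of the plane with coordinates `(pos, val)`, abstracting `Ẽ_w(u)`: edges
point to the right, no point lies strictly inside the rectangle spanned by an increasing edge, and
any two points in decreasing position are joined by a directed path. -/
structure IsRectangleDigraph (pos : α → β) (val : α → γ) (R : α → α → Prop) : Prop where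
  pos_injective : Function.Injective pos
  val_injective : Function.Injective val
  pos_lt_of_rel {a b : α} : R a b → pos a < pos b
  val_le_or_le_of_rel {a b c : α} :
    R a b → pos a < pos c → pos c < pos b → val c ≤ val a ∨ val b ≤ val c
  transGen_of_lt {a b : α} : pos a < pos b → val b < val a → TransGen R a b

/-- The linear extension of the reachability order of `R` that lists incomparable points by
decreasing value. -/
def DecreasingExtension (val : α → γ) (R : α → α → Prop) (a b : α) : Prop :=
  TransGen R a b ∨ IncompRel (TransGen R) a b ∧ val b < val a

namespace IsRectangleDigraph

variable {pos : α → β} {val : α → γ} {R : α → α → Prop} {a b c : α}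

theorem pos_lt_of_transGen (h : IsRectangleDigraph pos val R) (hab : TransGen R a b) :
    pos a < pos b :=
  hab.trans_induction_on h.pos_lt_of_rel fun _ _ => lt_trans

theorem not_transGen_self (h : IsRectangleDigraph pos val R) (a : α) : ¬ TransGen R a a :=
  fun haa => (h.pos_lt_of_transGen haa).false

theorem not_transGen_symm (h : IsRectangleDigraph pos val R) (hab : TransGen R a b) :
    ¬ TransGen R b a :=
  fun hba => h.not_transGen_self a (hab.trans hba)

theorem pos_lt_of_not_transGen (h : IsRectangleDigraph pos val R) (hab : ¬ TransGen R a b)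
    (hval : val b < val a) : pos b < pos a :=
  (h.pos_injective.ne (ne_of_apply_ne val hval.ne)).lt_of_le
    (not_lt.1 fun hpos => hab (h.transGen_of_lt hpos hval))

/-- The edge of the path that crosses the vertical line through `c` passes above or below `c`,
so one of its endpoints is joined to `c` by a path. -/
theorem exists_transGen_of_pos_between (h : IsRectangleDigraph pos val R)
    (hab : TransGen R a b) (hac : pos a < pos c) (hcb : pos c < pos b) :
    (TransGen R a c ∧ TransGen R c b) ∨
      (∃ s, ReflTransGen R a s ∧ TransGen R s c ∧ val c < val s) ∨
      ∃ t, TransGen R c t ∧ ReflTransGen R t b ∧ val t < val c := by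
  obtain ⟨s, t, has, hst, htb, hsc, hct⟩ := exists_step_of_reflTransGen hab.to_reflTransGen
    (p := fun y => pos c ≤ pos y) hac.not_ge hcb.le
  rw [not_le] at hsc
  rcases hct.eq_or_lt with hct | hct
  · obtain rfl := h.pos_injective hct
    refine .inl ⟨.tail' has hst, (reflTransGen_iff_eq_or_transGen.1 htb).resolve_left ?_⟩
    rintro rfl
    exact hcb.false
  · rcases h.val_le_or_le_of_rel hst hsc hct with hval | hval
    · have hval := hval.lt_of_ne (h.val_injective.ne (ne_of_apply_ne pos hsc.ne'))
      exact .inr (.inl ⟨s, has, h.transGen_of_lt hsc hval, hval⟩)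
    · have hval := hval.lt_of_ne (h.val_injective.ne (ne_of_apply_ne pos hct.ne'))
      exact .inr (.inr ⟨t, h.transGen_of_lt hct hval, htb, hval⟩)

theorem transGen_or_transGen_of_pos_between (h : IsRectangleDigraph pos val R)
    (hab : TransGen R a b) (hac : pos a < pos c) (hcb : pos c < pos b) :
    TransGen R a c ∨ TransGen R c b := by
  rcases h.exists_transGen_of_pos_between hab hac hcb with
    ⟨hac, _⟩ | ⟨s, has, hsc, _⟩ | ⟨t, hct, htb, _⟩
  · exact .inl hac
  · exact .inl (.trans_right has hsc)
  · exact .inr (hct.trans_left htb)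

theorem decreasingExtension_asymm (h : IsRectangleDigraph pos val R)
    (hab : DecreasingExtension val R a b) : ¬ DecreasingExtension val R b a := by
  rintro (hba | ⟨hba, hval⟩) <;> rcases hab with hab | ⟨hab, hval'⟩
  · exact h.not_transGen_symm hab hba
  · exact hab.2 hba
  · exact hba.2 hab
  · exact lt_asymm hval hval'

theorem not_decreasingExtension_of_transGen_of_transGen (h : IsRectangleDigraph pos val R)
    (hab : TransGen R a b) (hbc : TransGen R b c) : ¬ DecreasingExtension val R c a :=
  h.decreasingExtension_asymm (.inl (hab.trans hbc))

theorem not_decreasingExtension_of_transGen (h : IsRectangleDigraph pos val R)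
    (hab : TransGen R a b) (hbc : DecreasingExtension val R b c) :
    ¬ DecreasingExtension val R c a := by
  intro hca
  rcases hbc with hbc | hbc
  · exact h.not_decreasingExtension_of_transGen_of_transGen hab hbc hca
  rcases hca with hca | hca
  · exact h.not_decreasingExtension_of_transGen_of_transGen hca hab (.inr hbc)
  have hac_pos : pos a < pos c := h.pos_lt_of_not_transGen hca.1.1 hca.2
  have hcb_pos : pos c < pos b := h.pos_lt_of_not_transGen hbc.1.1 hbc.2
  exact (h.transGen_or_transGen_of_pos_between hab hac_pos hcb_pos).elim hca.1.2 hbc.1.2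

theorem not_decreasingExtension_cycle (h : IsRectangleDigraph pos val R)
    (hab : DecreasingExtension val R a b) (hbc : DecreasingExtension val R b c) :
    ¬ DecreasingExtension val R c a := by
  intro hca
  refine Or.elim hab (h.not_decreasingExtension_of_transGen · hbc hca) fun ⟨_, hval_ba⟩ => ?_
  refine Or.elim hbc (h.not_decreasingExtension_of_transGen · hca hab) fun ⟨_, hval_cb⟩ => ?_
  refine Or.elim hca (h.not_decreasingExtension_of_transGen · hab hbc) fun ⟨_, hval_ac⟩ => ?_
  exact (hval_ac.trans (hval_cb.trans hval_ba)).false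

theorem decreasingExtension_or_of_ne (h : IsRectangleDigraph pos val R) (hne : a ≠ b) :
    DecreasingExtension val R a b ∨ DecreasingExtension val R b a := by
  by_cases hab : TransGen R a b
  · exact .inl (.inl hab)
  by_cases hba : TransGen R b a
  · exact .inr (.inl hba)
  exact (h.val_injective.ne hne).lt_or_gt.symm.imp
    (fun hval => .inr ⟨⟨hab, hba⟩, hval⟩) (fun hval => .inr ⟨⟨hba, hab⟩, hval⟩)

theorem isStrictTotalOrder_decreasingExtension (h : IsRectangleDigraph pos val R) :
    IsStrictTotalOrder α (DecreasingExtension val R) where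
  trichotomous _ _ hab hba := not_imp_comm.1 h.decreasingExtension_or_of_ne (not_or_intro hab hba)
  irrefl _ haa := h.decreasingExtension_asymm haa haa
  trans a b c hab hbc := by
    have hne : a ≠ c := by
      rintro rfl
      exact h.decreasingExtension_asymm hab hbc
    exact (h.decreasingExtension_or_of_ne hne).resolve_right
      (h.not_decreasingExtension_cycle hab hbc)

theorem not_decreasingExtension_between (h : IsRectangleDigraph pos val R)
    (hab : TransGen R a b) (hcover : ∀ c, TransGen R a c → ¬ TransGen R c b)
    (hval : val a < val b) (hac : DecreasingExtension val R a c) :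
    ¬ DecreasingExtension val R c b := by
  intro hcb
  rcases hac with hac | ⟨hac, hval_ca⟩ <;> rcases hcb with hcb | ⟨hcb, hval_bc⟩
  · exact hcover c hac hcb
  · have hbc_pos : pos b < pos c := h.pos_lt_of_not_transGen hcb.1 hval_bc
    rcases h.exists_transGen_of_pos_between hac (h.pos_lt_of_transGen hab) hbc_pos with
      ⟨_, hbc⟩ | ⟨s, has, hsb, hval_bs⟩ | ⟨t, hbt, htc, _⟩
    · exact hcb.2 hbc
    · rcases reflTransGen_iff_eq_or_transGen.1 has with rfl | has
      · exact lt_asymm hval hval_bs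
      · exact hcover s has hsb
    · exact hcb.2 (hbt.trans_left htc)
  · have hca_pos : pos c < pos a := h.pos_lt_of_not_transGen hac.1 hval_ca
    rcases h.exists_transGen_of_pos_between hcb hca_pos (h.pos_lt_of_transGen hab) with
      ⟨hca, _⟩ | ⟨s, hcs, hsa, _⟩ | ⟨t, hat, htb, hval_ta⟩
    · exact hac.2 hca
    · exact hac.2 (.trans_right hcs hsa)
    · rcases reflTransGen_iff_eq_or_transGen.1 htb with rfl | htb
      · exact lt_asymm hval hval_ta
      · exact hcover t hat htb
  · exact lt_asymm hval (hval_bc.trans hval_ca)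

theorem exists_potential [Finite α] (h : IsRectangleDigraph pos val R) :
    ∃ f : α → ℕ,
      (∀ a b, TransGen R a b → (∀ c, TransGen R a c → ¬ TransGen R c b) → val a < val b →
        f a = f b) ∧
      ∀ a b, TransGen R a b → val b < val a → f a < f b := by
  classical
  have := h.isStrictTotalOrder_decreasingExtension
  let : LinearOrder α := linearOrderOfSTO (DecreasingExtension val R)
  refine ⟨descentCount val, fun a b hab hcover hval => ?_, fun a b hab hval => ?_⟩
  · have hcovBy : a ⋖ b :=
      ⟨.inl hab, fun _ => h.not_decreasingExtension_between hab hcover hval⟩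
    exact descentCount_eq_of_covBy hcovBy hval.le
  · exact descentCount_lt_of_lt (.inl hab) hval

end IsRectangleDigraph

end RectangleDigraph

section Length

open Finset

variable {n : ℕ}

/-- The inversions of `u`, as pairs of positions; `invLen u` is their number. -/
def inversions (u : Perm (Fin n)) : Finset (Fin n × Fin n) :=
  {p | p.1 < p.2 ∧ u p.2 < u p.1}

theorem mem_inversions {u : Perm (Fin n)} {p : Fin n × Fin n} :
    p ∈ inversions u ↔ p.1 < p.2 ∧ u p.2 < u p.1 := by
  simp [inversions]

theorem invLen_eq_card_inversions (u : Perm (Fin n)) : invLen u = #(inversions u) := rfl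

theorem card_inversions_mul_sdiff (v σ : Perm (Fin n)) :
    #(inversions (v * σ) \ inversions σ) = #(inversions v \ inversions σ⁻¹) := by
  refine card_equiv (σ.prodCongr σ) fun ⟨a, b⟩ => ?_
  have hinj : σ a = σ b ↔ a = b := σ.injective.eq_iff
  simp only [mem_sdiff, mem_inversions, Perm.mul_apply, prodCongr_apply, Prod.map,
    Perm.inv_def, symm_apply_apply]
  grind

theorem inversions_swap {i j : Fin n} (hij : i < j) :
    inversions (swap i j) = {i} ×ˢ Ioc i j ∪ Ioo i j ×ˢ {j} := by
  ext ⟨a, b⟩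
  simp only [mem_inversions, mem_union, mem_product, mem_singleton, mem_Ioc, mem_Ioo,
    swap_apply_def]
  grind

theorem card_inversions_inter_inversions_swap (v : Perm (Fin n)) {i j : Fin n} (hij : i < j) :
    #(inversions v ∩ inversions (swap i j)) =
      #{k ∈ Ioc i j | v k < v i} + #{k ∈ Ioo i j | v j < v k} := by
  have hunion : inversions v ∩ inversions (swap i j) =
      {i} ×ˢ {k ∈ Ioc i j | v k < v i} ∪ {k ∈ Ioo i j | v j < v k} ×ˢ {j} := by
    ext ⟨a, b⟩
    simp only [inversions_swap hij, mem_inter, mem_inversions, mem_union, mem_product,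
      mem_singleton, mem_Ioc, mem_Ioo, mem_filter]
    grind
  rw [hunion, card_union_of_disjoint, card_product, card_product, card_singleton, card_singleton,
    one_mul, mul_one]
  simp only [disjoint_left, mem_product, mem_singleton, mem_filter, mem_Ioo]
  grind

theorem card_inversions_inter_inversions_swap_of_lt (v : Perm (Fin n)) {i j : Fin n} (hij : i < j)
    (hv : v i < v j) :
    #(inversions v ∩ inversions (swap i j)) =
      #{k ∈ Ioo i j | v k < v i} + #{k ∈ Ioo i j | v j < v k} := by
  rw [card_inversions_inter_inversions_swap v hij, ← Ioo_insert_right hij, filter_insert,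
    if_neg hv.not_gt]

theorem filter_Ioo_mul_swap (v : Perm (Fin n)) (i j : Fin n) (p : Fin n → Prop)
    [DecidablePred p] : {k ∈ Ioo i j | p ((v * swap i j) k)} = {k ∈ Ioo i j | p (v k)} :=
  filter_congr fun k hk => by
    rw [Perm.mul_apply, swap_apply_of_ne_of_ne (mem_Ioo.1 hk).1.ne' (mem_Ioo.1 hk).2.ne]

theorem card_inversions_mul_swap_inter_inversions_swap_of_lt (v : Perm (Fin n)) {i j : Fin n}
    (hij : i < j) (hv : v i < v j) :
    #(inversions (v * swap i j) ∩ inversions (swap i j)) =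
      1 + #{k ∈ Ioo i j | v k < v j} + #{k ∈ Ioo i j | v i < v k} := by
  have hi : (v * swap i j) i = v j := by rw [Perm.mul_apply, swap_apply_left]
  have hj : (v * swap i j) j = v i := by rw [Perm.mul_apply, swap_apply_right]
  rw [card_inversions_inter_inversions_swap _ hij, ← Ioo_insert_right hij, filter_insert, hi, hj,
    if_pos hv, filter_Ioo_mul_swap v i j (· < v j), filter_Ioo_mul_swap v i j (v i < ·),
    card_insert_of_notMem (by simp), add_comm 1]

theorem invLen_mul_swap_of_lt (v : Perm (Fin n)) {i j : Fin n} (hij : i < j) (hv : v i < v j) :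
    invLen (v * swap i j) = invLen v + 1 + 2 * #{k ∈ Ioo i j | v i < v k ∧ v k < v j} := by
  have hsdiff : #(inversions (v * swap i j) \ inversions (swap i j)) =
      #(inversions v \ inversions (swap i j)) := by
    simpa only [swap_inv] using card_inversions_mul_sdiff v (swap i j)
  have hbelow : #{k ∈ Ioo i j | v k < v j} =
      #{k ∈ Ioo i j | v k < v i} + #{k ∈ Ioo i j | v i < v k ∧ v k < v j} := by
    rw [← card_union_of_disjoint (by simp only [disjoint_left, mem_filter]; grind), ← filter_or]
    refine congrArg card (filter_congr fun k hk => ?_)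
    have := v.injective.ne (mem_Ioo.1 hk).1.ne
    grind
  have habove : #{k ∈ Ioo i j | v i < v k} =
      #{k ∈ Ioo i j | v j < v k} + #{k ∈ Ioo i j | v i < v k ∧ v k < v j} := by
    rw [← card_union_of_disjoint (by simp only [disjoint_left, mem_filter]; grind), ← filter_or]
    refine congrArg card (filter_congr fun k hk => ?_)
    have := v.injective.ne (mem_Ioo.1 hk).2.ne
    grind
  rw [invLen_eq_card_inversions, invLen_eq_card_inversions,
    ← card_inter_add_card_sdiff (inversions (v * swap i j)) (inversions (swap i j)),
    ← card_inter_add_card_sdiff (inversions v) (inversions (swap i j)),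
    card_inversions_inter_inversions_swap_of_lt v hij hv,
    card_inversions_mul_swap_inter_inversions_swap_of_lt v hij hv]
  lia

theorem invLen_swap_mul_of_lt (v : Perm (Fin n)) {i j : Fin n} (hij : i < j) (hv : v i < v j) :
    invLen (swap (v i) (v j) * v) =
      invLen v + 1 + 2 * #{k ∈ Ioo i j | v i < v k ∧ v k < v j} := by
  rw [← mul_swap_eq_swap_mul, invLen_mul_swap_of_lt v hij hv]

theorem invLen_eq_invLen_swap_mul_add_of_gt (u : Perm (Fin n)) {i j : Fin n} (hij : i < j)
    (hu : u j < u i) :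
    invLen u = invLen (swap (u i) (u j) * u) + 1 +
      2 * #{k ∈ Ioo i j | u j < u k ∧ u k < u i} := by
  have hi : (u * swap i j) i = u j := by rw [Perm.mul_apply, swap_apply_left]
  have hj : (u * swap i j) j = u i := by rw [Perm.mul_apply, swap_apply_right]
  have hlen := invLen_mul_swap_of_lt (u * swap i j) hij (by rwa [hi, hj])
  rwa [hi, hj, mul_swap_mul_self, filter_Ioo_mul_swap u i j fun x => u j < x ∧ x < u i,
    mul_swap_eq_swap_mul] at hlen

end Length

section Bruhat

open Finset Relation

variable {n : ℕ} {u w : Perm (Fin n)}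

theorem BruhatLE.swap_mul (h : BruhatLE u w) {a b : Fin n} (hab : a ≠ b)
    (hlen : invLen (swap a b * u) < invLen u) : BruhatLE (swap a b * u) w := by
  obtain ⟨m, c, rfl, rfl, hc⟩ := h
  refine ⟨m + 1, fun k => k.casesOn (swap a b * c 0) c, rfl, rfl, ?_⟩
  rintro (_ | k) hk
  · exact ⟨⟨swap a b, ⟨a, b, hab, rfl⟩, (swap_mul_self_mul a b (c 0)).symm⟩, hlen⟩
  · exact hc k (Nat.lt_of_succ_lt_succ hk)

theorem mem_Etilde_apply {i j : Fin n} :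
    (u i, u j) ∈ Etilde w u ↔ i < j ∧ BruhatLE (swap (u i) (u j) * u) w ∧
      |(invLen (swap (u i) (u j) * u) : ℤ) - invLen u| = 1 := by
  simp [Etilde, and_left_comm, eq_comm]

theorem le_or_le_of_mem_Etilde {i j k : Fin n} (h : (u i, u j) ∈ Etilde w u) (hik : i < k)
    (hkj : k < j) : u k ≤ u i ∨ u j ≤ u k := by
  by_contra! hk
  obtain ⟨hij, -, hlen⟩ := mem_Etilde_apply.1 h
  have hpos : 0 < #{l ∈ Ioo i j | u i < u l ∧ u l < u j} :=
    card_pos.2 ⟨k, mem_filter.2 ⟨mem_Ioo.2 ⟨hik, hkj⟩, hk⟩⟩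
  rw [invLen_swap_mul_of_lt u hij (hk.1.trans hk.2), abs_eq zero_le_one] at hlen
  lia

theorem mem_Etilde_of_descent (hle : BruhatLE u w) {i j : Fin n} (hij : i < j) (hu : u j < u i)
    (hempty : ∀ k ∈ Ioo i j, ¬ (u j < u k ∧ u k < u i)) : (u i, u j) ∈ Etilde w u := by
  have hlen := invLen_eq_invLen_swap_mul_add_of_gt u hij hu
  rw [filter_false_of_mem hempty, card_empty] at hlen
  refine mem_Etilde_apply.2 ⟨hij, hle.swap_mul hu.ne' (by lia), ?_⟩
  rw [abs_eq zero_le_one]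
  lia

theorem transGen_Etilde_of_descent (hle : BruhatLE u w) {i j : Fin n} (hij : i < j)
    (hu : u j < u i) : TransGen (fun a b => (a, b) ∈ Etilde w u) (u i) (u j) := by
  induction hd : (j : ℕ) - i using Nat.strong_induction_on generalizing i j with
  | _ d ih =>
    by_cases hempty : ∀ k ∈ Ioo i j, ¬ (u j < u k ∧ u k < u i)
    · exact .single (mem_Etilde_of_descent hle hij hu hempty)
    · push Not at hempty
      obtain ⟨k, hk, hjk, hki⟩ := hempty
      obtain ⟨hik, hkj⟩ := mem_Ioo.1 hk
      exact (ih _ (by lia) hik hki rfl).trans (ih _ (by lia) hkj hjk rfl)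

theorem isRectangleDigraph_Etilde (hle : BruhatLE u w) :
    IsRectangleDigraph u.symm id fun a b => (a, b) ∈ Etilde w u where
  pos_injective := u.symm.injective
  val_injective := Function.injective_id
  pos_lt_of_rel := by
    rintro _ _ ⟨i, j, hij, ⟨⟩, -⟩
    simpa only [symm_apply_apply] using hij
  val_le_or_le_of_rel {a b c} hab hac hcb := by
    rw [← u.apply_symm_apply a, ← u.apply_symm_apply b] at hab
    simpa only [apply_symm_apply, id] using le_or_le_of_mem_Etilde hab hac hcb
  transGen_of_lt {a b} hpos hval := by
    have hdesc : u (u.symm b) < u (u.symm a) := by simpa only [apply_symm_apply, id] using hval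
    simpa only [apply_symm_apply] using transGen_Etilde_of_descent hle hpos hdesc

theorem not_transGen_of_mem_Ered {p : Fin n × Fin n} (hp : p ∈ Ered w u) (c : Fin n)
    (hac : TransGen (fun a b => (a, b) ∈ Etilde w u) p.1 c) :
    ¬ TransGen (fun a b => (a, b) ∈ Etilde w u) c p.2 := by
  intro hcb
  obtain ⟨d, had, hdc⟩ := TransGen.head'_iff.1 hac
  exact hp.2 ⟨d, had, .trans_right hdc hcb⟩

end Bruhat

theorem stmt6 {n : ℕ} (hn : 1 ≤ n) (w u : Equiv.Perm (Fin n)) (hle : BruhatLE u w) :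
    ∃ f : Fin n → ℝ,
      (∀ p ∈ Eplus w u, f p.1 = f p.2) ∧
      (∀ p ∈ Eminus w u, f p.2 < f p.1) := by
  obtain ⟨f, hf_eq, hf_lt⟩ := (isRectangleDigraph_Etilde hle).exists_potential
  refine ⟨fun a => -f a, fun p ⟨hp, hlt⟩ => ?_, fun p ⟨hp, hgt⟩ => ?_⟩
  · have : f p.1 = f p.2 := hf_eq p.1 p.2 (.single hp.1) (not_transGen_of_mem_Ered hp) hlt
    simp only [this]
  · have : f p.1 < f p.2 := hf_lt p.1 p.2 (.single hp.1) hgt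
    simpa using this
end

section
/- Let u ≤ w in S_n. There exists a linear map F : ℝ^n → ℝ such that F(μ(t_{a,b} · u)) = F(μ(u)) for every (a,b) ∈ E_w(u)^+ and F(μ(t_{a,b} · u)) > F(μ(u)) for every (a,b) ∈ E_w(u)^−; equivalently, F(e_a − e_b) = 0 for every (a,b) ∈ E_w(u)^+ and F(e_a − e_b) > 0 for every (a,b) ∈ E_w(u)^−. -/
open Equiv

/-!
The functional `F` is given by a function `f` on values, which has to be constant along `E_w(u)^+`
and to decrease along `E_w(u)^-`; it can even be made to decrease along all inversions of `u`.

Draw the points `(i, u i)`. An edge of `E_w(u)^+` joins two points such that the open rectangle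
between them contains no third one. Every inversion of `u` is realised by a directed path in
`Ẽ_w(u)`, so in the transitive reduction no edge of `E_w(u)^+` can be bypassed by inversions and
further edges of `E_w(u)^+`. Together these two facts force the edges of `E_w(u)^+` to form chains
that do not cross. Then `f` is built by sweeping the picture from right to left: a point that is
the start of an edge takes the value at its end, and any other point takes a value strictly between
those already given below and above it on the sweep line.
-/

section Sweep

variable {V β γ : Type*} [LinearOrder V]

/-- The pair of positions `(i, j)` is an inversion of `y`: the point `(i, y i)` of the graph of `y`
lies strictly to the north-west of `(j, y j)`. -/
def IsInversion [Preorder β] (y : V → β) (i j : V) : Prop :=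
  i < j ∧ y j < y i

theorem IsInversion.trans [Preorder β] {y : V → β} {i j k : V} (hij : IsInversion y i j)
    (hjk : IsInversion y j k) : IsInversion y i k :=
  ⟨hij.1.trans hjk.1, hjk.2.trans hij.2⟩

/-- `G` is a system of north-east arcs on the graph of `y`, at most one starting at each point,
that do not cross: an arc `c → d` that starts below an arc `a → b`, at a position between `a` and
`b`, also ends below it. "Below" is expressed by inversions, with `a` or with `b` according to the
position of `d`. -/
structure IsNoncrossing [Preorder β] (y : V → β) (G : V → V → Prop) : Prop where
  lt : ∀ ⦃a b⦄, G a b → a < b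
  apply_lt : ∀ ⦃a b⦄, G a b → y a < y b
  rightUnique : Relator.RightUnique G
  noncrossing : ∀ ⦃a b c d⦄, G a b → G c d → IsInversion y a c → c < b →
    IsInversion y a d ∨ IsInversion y b d

/-- The invariant of the right-to-left sweep: `f` is constant along the arcs inside the swept set
`S` and decreases along inversions in `S`. Inversions whose left end `p` has not been swept also
count as soon as an arc joins `p` to a point `q` of `S`, because `p` will receive the value
`f q`. -/
structure IsPotentialOn [Preorder β] [Preorder γ] (y : V → β) (G : V → V → Prop) (S : Finset V)
    (f : V → γ) : Prop where
  eq_of_arc : ∀ ⦃p q⦄, p ∈ S → q ∈ S → G p q → f p = f q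
  lt_of_isInversion : ∀ ⦃p q r⦄, q ∈ S → r ∈ S → Relation.ReflGen G p q → IsInversion y p r →
    f r < f q

variable [Preorder β] {y : V → β} {G : V → V → Prop} {S : Finset V} {m : V}

theorem IsPotentialOn.update [Preorder γ] {f : V → γ} (hG : IsNoncrossing y G)
    (hf : IsPotentialOn y G S f) (hm : ∀ s ∈ S, m < s) {c : γ}
    (arc : ∀ q ∈ S, G m q → c = f q)
    (above : ∀ r ∈ S, IsInversion y m r → f r < c)
    (below : ∀ p, ∀ q ∈ S, G p q → IsInversion y p m → c < f q) :
    IsPotentialOn y G (insert m S) (Function.update f m c) := by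
  have update_of_mem : ∀ s ∈ S, Function.update f m c s = f s := fun s hs =>
    Function.update_of_ne (hm s hs).ne' _ _
  constructor
  · intro p q hp hq hpq
    rcases Finset.mem_insert.1 hp with rfl | hpS <;>
      rcases Finset.mem_insert.1 hq with rfl | hqS
    · rfl
    · rw [Function.update_self, update_of_mem q hqS, arc q hqS hpq]
    · exact absurd (hG.lt hpq) (hm p hpS).asymm
    · rw [update_of_mem p hpS, update_of_mem q hqS, hf.eq_of_arc hpS hqS hpq]
  · intro p q r hq hr hpq hpr
    rcases Finset.mem_insert.1 hq with rfl | hqS <;>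
      rcases Finset.mem_insert.1 hr with rfl | hrS
    · rcases hpq with _ | hpq
      · exact absurd hpr.1 (lt_irrefl _)
      · exact absurd (hG.apply_lt hpq) hpr.2.asymm
    · rw [Function.update_self, update_of_mem r hrS]
      rcases hpq with _ | hpq
      · exact above r hrS hpr
      · exact above r hrS ⟨hm r hrS, hpr.2.trans (hG.apply_lt hpq)⟩
    · rw [Function.update_self, update_of_mem q hqS]
      rcases hpq with _ | hpq
      · exact absurd hpr.1 (hm _ hqS).asymm
      · exact below p q hqS hpq hpr
    · rw [update_of_mem q hqS, update_of_mem r hrS]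
      exact hf.lt_of_isInversion hqS hrS hpq hpr

variable [LinearOrder γ] [DenselyOrdered γ] [NoMinOrder γ] [NoMaxOrder γ]

theorem IsPotentialOn.exists_insert {f : V → γ} (hG : IsNoncrossing y G)
    (hf : IsPotentialOn y G S f) (hm : ∀ s ∈ S, m < s) :
    ∃ g : V → γ, IsPotentialOn y G (insert m S) g := by
  classical
  by_cases hsucc : ∃ q ∈ S, G m q
  · obtain ⟨q, hq, hmq⟩ := hsucc
    refine ⟨_, hf.update hG hm (c := f q) ?_ ?_ ?_⟩
    · exact fun q' _ hmq' => congrArg f (hG.rightUnique hmq hmq')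
    · exact fun r hr hmr => hf.lt_of_isInversion hq hr (.single hmq) hmr
    · intro p q' hq' hpq' hpm
      rcases hG.noncrossing hpq' hmq hpm (hm q' hq') with hpq | hqq
      · exact hf.lt_of_isInversion hq' hq (.single hpq') hpq
      · exact hf.lt_of_isInversion hq' hq .refl hqq
  · have : Nonempty γ := ⟨f m⟩
    obtain ⟨c, above, below⟩ := Order.exists_between_finsets
      ({r ∈ S | IsInversion y m r}.image f)
      ({q ∈ S | ∃ p, G p q ∧ IsInversion y p m}.image f) (by
        simp only [Finset.forall_mem_image, Finset.mem_filter]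
        rintro r ⟨hr, hmr⟩ q ⟨hq, p, hpq, hpm⟩
        exact hf.lt_of_isInversion hq hr (.single hpq) (hpm.trans hmr))
    simp only [Finset.forall_mem_image, Finset.mem_filter] at above below
    exact ⟨_, hf.update hG hm (fun q hq hmq => absurd ⟨q, hq, hmq⟩ hsucc)
      (fun r hr hmr => above ⟨hr, hmr⟩) (fun p q hq hpq hpm => below ⟨hq, p, hpq, hpm⟩)⟩

theorem IsNoncrossing.exists_potential [Finite V] [Nonempty γ] (hG : IsNoncrossing y G) :
    ∃ f : V → γ, (∀ i j, G i j → f i = f j) ∧ ∀ i j, IsInversion y i j → f j < f i := by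
  have := Fintype.ofFinite V
  have sweep : ∀ S : Finset V, ∃ f : V → γ, IsPotentialOn y G S f := fun S => by
    induction S using Finset.induction_on_min with
    | empty => exact ⟨fun _ => Classical.arbitrary γ, by constructor <;> simp⟩
    | insert m S hm ih =>
      obtain ⟨f, hf⟩ := ih
      exact hf.exists_insert hG hm
  obtain ⟨f, hf⟩ := sweep Finset.univ
  exact ⟨f, fun i j => hf.eq_of_arc (Finset.mem_univ i) (Finset.mem_univ j), fun i j =>
    hf.lt_of_isInversion (Finset.mem_univ i) (Finset.mem_univ j) .refl⟩

end Sweep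

section Length

theorem sum_sum_eq_of_symm {ι M : Type*} [Fintype ι] [DecidableEq ι] [AddCommMonoid M]
    {g : ι → ι → M} (symm : ∀ k l, g k l = g l k) (diag : ∀ k, g k k = 0) {i j : ι}
    (hij : i ≠ j) :
    ∑ k, ∑ l, g k l = 2 • g i j + 2 • ∑ k ∈ {i, j}ᶜ, (g k i + g k j) +
      ∑ k ∈ {i, j}ᶜ, ∑ l ∈ {i, j}ᶜ, g k l := by
  have split (F : ι → M) : ∑ k, F k = F i + F j + ∑ k ∈ {i, j}ᶜ, F k := by
    rw [← Finset.sum_add_sum_compl {i, j}, Finset.sum_pair hij]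
  have column (a : ι) : ∑ l ∈ {i, j}ᶜ, g a l = ∑ l ∈ {i, j}ᶜ, g l a :=
    Finset.sum_congr rfl fun l _ => symm a l
  simp only [split, Finset.sum_add_distrib, diag, column i, column j, symm j i]
  abel

variable {n : ℕ} (u : Perm (Fin n)) {i j k : Fin n}

/-- The indicator of the unordered pair `{k, l}` being an inversion of `u`. Being symmetric, it
can be summed over all ordered pairs, at the price of counting every inversion twice. -/
def inversionIndicator (k l : Fin n) : ℕ :=
  if (k < l ∧ u l < u k) ∨ (l < k ∧ u k < u l) then 1 else 0

/-- The positions of the points of the graph of `u` inside the open rectangle with south-west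
corner `(i, u i)` and north-east corner `(j, u j)`. -/
def rectPositions (i j : Fin n) : Finset (Fin n) :=
  {k ∈ Finset.Ioo i j | u k ∈ Finset.Ioo (u i) (u j)}

theorem two_mul_invLen : 2 * invLen u = ∑ k, ∑ l, inversionIndicator u k l := by
  have h : invLen u = ∑ k, ∑ l, if k < l ∧ u l < u k then 1 else 0 := by
    rw [invLen, Finset.card_filter, Fintype.sum_prod_type]
  have h' : invLen u = ∑ k, ∑ l, if l < k ∧ u k < u l then 1 else 0 := by
    rw [h, Finset.sum_comm]
  rw [two_mul]
  nth_rewrite 1 [h]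
  simp only [h', ← Finset.sum_add_distrib]
  refine Finset.sum_congr rfl fun k _ => Finset.sum_congr rfl fun l _ => ?_
  unfold inversionIndicator
  split_ifs <;> omega

theorem two_mul_invLen_split (hij : i ≠ j) :
    2 * invLen u = 2 * inversionIndicator u i j +
      2 * ∑ k ∈ {i, j}ᶜ, (inversionIndicator u k i + inversionIndicator u k j) +
      ∑ k ∈ {i, j}ᶜ, ∑ l ∈ {i, j}ᶜ, inversionIndicator u k l := by
  rw [two_mul_invLen]
  exact sum_sum_eq_of_symm (g := inversionIndicator u) (fun k l => if_congr or_comm rfl rfl)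
    (fun k => by simp [inversionIndicator]) hij

theorem swap_mul_apply_of_ne (hki : k ≠ i) (hkj : k ≠ j) : (swap (u i) (u j) * u) k = u k :=
  swap_apply_of_ne_of_ne (u.injective.ne hki) (u.injective.ne hkj)

theorem inversionIndicator_swap_mul (hij : i < j) (hu : u i < u j) (hki : k ≠ i) (hkj : k ≠ j) :
    inversionIndicator (swap (u i) (u j) * u) k i +
        inversionIndicator (swap (u i) (u j) * u) k j =
      inversionIndicator u k i + inversionIndicator u k j +
        2 * if k ∈ rectPositions u i j then 1 else 0 := by
  have hui : u k ≠ u i := u.injective.ne hki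
  have huj : u k ≠ u j := u.injective.ne hkj
  simp only [inversionIndicator, rectPositions, swap_mul_apply_of_ne u hki hkj, Perm.mul_apply,
    swap_apply_left, swap_apply_right, Finset.mem_filter, Finset.mem_Ioo]
  generalize u k = a at *
  generalize u i = b at *
  generalize u j = c at *
  split_ifs <;> omega

theorem invLen_swap_mul (hij : i < j) (hu : u i < u j) :
    invLen (swap (u i) (u j) * u) = invLen u + 1 + 2 * (rectPositions u i j).card := by
  set v := swap (u i) (u j) * u with hv
  have pair_u : inversionIndicator u i j = 0 := if_neg (by omega)
  have pair_v : inversionIndicator v i j = 1 := if_pos (by simp [hv, hij, hu])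
  have outside : ∑ k ∈ {i, j}ᶜ, ∑ l ∈ {i, j}ᶜ, inversionIndicator v k l =
      ∑ k ∈ {i, j}ᶜ, ∑ l ∈ {i, j}ᶜ, inversionIndicator u k l := by
    refine Finset.sum_congr rfl fun k hk => Finset.sum_congr rfl fun l hl => ?_
    simp only [Finset.mem_compl, Finset.mem_insert, Finset.mem_singleton, not_or] at hk hl
    simp only [inversionIndicator, hv, swap_mul_apply_of_ne u hk.1 hk.2,
      swap_mul_apply_of_ne u hl.1 hl.2]
  have card_rect : (rectPositions u i j).card =
      ∑ k ∈ {i, j}ᶜ, if k ∈ rectPositions u i j then 1 else 0 := by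
    rw [Finset.sum_boole, Nat.cast_id, Finset.filter_mem_eq_inter, Finset.inter_eq_right.2]
    intro k hk
    simp only [rectPositions, Finset.mem_filter, Finset.mem_Ioo] at hk
    simp [hk.1.1.ne', hk.1.2.ne]
  have mixed : ∑ k ∈ {i, j}ᶜ, (inversionIndicator v k i + inversionIndicator v k j) =
      ∑ k ∈ {i, j}ᶜ, (inversionIndicator u k i + inversionIndicator u k j) +
        2 * (rectPositions u i j).card := by
    rw [card_rect, Finset.mul_sum, ← Finset.sum_add_distrib]
    refine Finset.sum_congr rfl fun k hk => ?_
    simp only [Finset.mem_compl, Finset.mem_insert, Finset.mem_singleton, not_or] at hk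
    exact inversionIndicator_swap_mul u hij hu hk.1 hk.2
  have split_u := two_mul_invLen_split u hij.ne
  have split_v := two_mul_invLen_split v hij.ne
  omega

theorem invLen_swap_mul_of_isInversion (h : IsInversion u i j)
    (hrect : ∀ k, IsInversion u i k → ¬ IsInversion u k j) :
    invLen u = invLen (swap (u i) (u j) * u) + 1 := by
  set v := swap (u i) (u j) * u with hv
  have hvi : v i = u j := by simp [hv]
  have hvj : v j = u i := by simp [hv]
  have hvu : swap (v i) (v j) * v = u := by rw [hvi, hvj, swap_comm, hv, swap_mul_self_mul]
  have rect_empty : rectPositions v i j = ∅ := by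
    refine Finset.filter_eq_empty_iff.2 fun k hk hvk => ?_
    rw [Finset.mem_Ioo] at hk hvk
    rw [hvi, hvj, hv, swap_mul_apply_of_ne u hk.1.ne' hk.2.ne] at hvk
    exact hrect k ⟨hk.1, hvk.2⟩ ⟨hk.2, hvk.1⟩
  have := invLen_swap_mul v h.1 (by rw [hvi, hvj]; exact h.2)
  rwa [hvu, rect_empty, Finset.card_empty] at this

end Length

section Edges

variable {n : ℕ} {u v w τ : Perm (Fin n)}

theorem BruhatLE.of_mul (hτ : IsTransposition τ) (hlt : invLen v < invLen (τ * v))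
    (h : BruhatLE (τ * v) w) : BruhatLE v w := by
  obtain ⟨m, c, hc₀, hcm, hc⟩ := h
  refine ⟨m + 1, fun k => Nat.casesOn k v c, rfl, hcm, ?_⟩
  rintro (_ | k) hk
  · exact ⟨⟨τ, hτ, hc₀⟩, hlt.trans_eq (congrArg invLen hc₀.symm)⟩
  · exact hc k (Nat.lt_of_succ_lt_succ hk)

/-- Reachability in the digraph `Ẽ_w(u)` by a directed path with at least one edge. -/
def EtildePath (w u : Perm (Fin n)) : Fin n → Fin n → Prop :=
  Relation.TransGen fun a b => (a, b) ∈ Etilde w u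

theorem inv_lt_inv_of_mem_etilde {p : Fin n × Fin n} (hp : p ∈ Etilde w u) :
    u⁻¹ p.1 < u⁻¹ p.2 := by
  obtain ⟨i, j, hij, rfl, -⟩ := hp
  simpa using hij

theorem mem_etilde_of_isInversion (hle : BruhatLE u w) {i j : Fin n} (h : IsInversion u i j)
    (hrect : ∀ k, IsInversion u i k → ¬ IsInversion u k j) : (u i, u j) ∈ Etilde w u := by
  have hlen := invLen_swap_mul_of_isInversion u h hrect
  refine ⟨i, j, h.1, rfl, .of_mul (τ := swap (u i) (u j)) ⟨_, _, h.2.ne', rfl⟩ ?_ ?_, ?_⟩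
  · rw [swap_mul_self_mul]
    omega
  · rwa [swap_mul_self_mul]
  · rw [hlen]
    simp

theorem etildePath_of_isInversion (hle : BruhatLE u w) {i j : Fin n} (h : IsInversion u i j) :
    EtildePath w u (u i) (u j) := by
  by_cases hrect : ∃ k, IsInversion u i k ∧ IsInversion u k j
  · obtain ⟨k, hik, hkj⟩ := hrect
    exact (etildePath_of_isInversion hle hik).trans (etildePath_of_isInversion hle hkj)
  · exact .single (mem_etilde_of_isInversion hle h fun k hik hkj => hrect ⟨k, hik, hkj⟩)
termination_by (j : ℕ) - i
decreasing_by
  all_goals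
    have := hik.1
    have := hkj.1
    omega

theorem not_etildePath_of_mem_ered {a b c : Fin n} (hab : (a, b) ∈ Ered w u)
    (hac : EtildePath w u a c) : ¬ EtildePath w u c b := fun hcb => by
  obtain ⟨d, had, hdc⟩ := Relation.TransGen.head'_iff.1 hac
  exact hab.2 ⟨d, had, hcb.trans_right hdc⟩

/-- The arcs of `E_w(u)^+`, read as arcs between positions instead of values. -/
def PlusArc (w u : Perm (Fin n)) (i j : Fin n) : Prop :=
  (u i, u j) ∈ Eplus w u

namespace PlusArc

variable {i j k l : Fin n}

theorem lt (h : PlusArc w u i j) : i < j := by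
  simpa using inv_lt_inv_of_mem_etilde h.1.1

theorem apply_lt (h : PlusArc w u i j) : u i < u j :=
  h.2

theorem etildePath (h : PlusArc w u i j) : EtildePath w u (u i) (u j) :=
  .single h.1.1

theorem not_etildePath (h : PlusArc w u i j) (hik : EtildePath w u (u i) (u k)) :
    ¬ EtildePath w u (u k) (u j) :=
  not_etildePath_of_mem_ered h.1 hik

theorem rectPositions_eq_empty (h : PlusArc w u i j) : rectPositions u i j = ∅ := by
  obtain ⟨i', j', -, hp, -, hlen⟩ := h.1.1
  rw [← (Prod.mk.inj hp).1, ← (Prod.mk.inj hp).2, invLen_swap_mul u h.lt h.apply_lt,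
    abs_eq zero_le_one] at hlen
  rw [← Finset.card_eq_zero]
  omega

theorem apply_lt_or_lt_apply (h : PlusArc w u i j) (hik : i < k) (hkj : k < j) :
    u k < u i ∨ u j < u k := by
  by_contra! hk
  have hmem : k ∈ rectPositions u i j := by
    simp only [rectPositions, Finset.mem_filter, Finset.mem_Ioo]
    exact ⟨⟨hik, hkj⟩, hk.1.lt_of_ne (u.injective.ne hik.ne),
      hk.2.lt_of_ne (u.injective.ne hkj.ne)⟩
  simp [h.rectPositions_eq_empty] at hmem

theorem not_lt_of_plusArc (hle : BruhatLE u w) (hij : PlusArc w u i j) (hik : PlusArc w u i k) :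
    ¬ j < k := fun hjk => by
  rcases hik.apply_lt_or_lt_apply hij.lt hjk with hji | hkj
  · exact hji.asymm hij.apply_lt
  · exact hik.not_etildePath hij.etildePath (etildePath_of_isInversion hle ⟨hjk, hkj⟩)

theorem rightUnique (hle : BruhatLE u w) : Relator.RightUnique (PlusArc w u) :=
  fun _ _ _ hij hik => le_antisymm (not_lt.1 (not_lt_of_plusArc hle hik hij))
    (not_lt.1 (not_lt_of_plusArc hle hij hik))

theorem noncrossing (hle : BruhatLE u w) (hij : PlusArc w u i j) (hkl : PlusArc w u k l)
    (hik : IsInversion u i k) (hkj : k < j) : IsInversion u i l ∨ IsInversion u j l := by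
  have path_ik := etildePath_of_isInversion hle hik
  have path_il : EtildePath w u (u i) (u l) := path_ik.trans hkl.etildePath
  have hil : i < l := hik.1.trans hkl.lt
  rcases lt_trichotomy j l with hjl | rfl | hlj
  · rcases hkl.apply_lt_or_lt_apply hkj hjl with hjk | hlj
    · exact absurd (hjk.trans hik.2) hij.apply_lt.asymm
    · exact .inr ⟨hjl, hlj⟩
  · exact absurd hkl.etildePath (hij.not_etildePath path_ik)
  · rcases hij.apply_lt_or_lt_apply hil hlj with hli | hjl
    · exact .inl ⟨hil, hli⟩
    · exact absurd (etildePath_of_isInversion hle ⟨hlj, hjl⟩) (hij.not_etildePath path_il)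

theorem isNoncrossing (hle : BruhatLE u w) : IsNoncrossing u (PlusArc w u) where
  lt _ _ := lt
  apply_lt _ _ := apply_lt
  rightUnique := rightUnique hle
  noncrossing _ _ _ _ := noncrossing hle

end PlusArc

theorem exists_eq_on_eplus_lt_on_eminus (hle : BruhatLE u w) :
    ∃ f : Fin n → ℝ, (∀ p ∈ Eplus w u, f p.1 = f p.2) ∧ ∀ p ∈ Eminus w u, f p.2 < f p.1 := by
  obtain ⟨f, hplus, hinv⟩ := (PlusArc.isNoncrossing hle).exists_potential (γ := ℝ)
  refine ⟨fun a => f (u⁻¹ a), fun p hp => hplus _ _ ?_, fun p hp => hinv _ _ ⟨?_, ?_⟩⟩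
  · simpa [PlusArc] using hp
  · exact inv_lt_inv_of_mem_etilde hp.1.1
  · simpa using hp.2

end Edges

section MomentMap

variable {n : ℕ}

theorem stdB_eq_single (a : Fin n) : stdB a = Pi.single a (1 : ℝ) := by
  ext k
  simp [stdB, Pi.single_apply]

theorem mu_swap_mul_sub (u : Perm (Fin n)) (a b : Fin n) :
    mu (swap a b * u) - mu u = ((u⁻¹ b : ℝ) - (u⁻¹ a : ℝ)) • (stdB a - stdB b) := by
  ext k
  simp only [mu, stdB, mul_inv_rev, swap_inv, Perm.mul_apply, Pi.sub_apply, Pi.smul_apply,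
    smul_eq_mul]
  by_cases hka : k = a <;> by_cases hkb : k = b <;> simp_all [swap_apply_of_ne_of_ne]

end MomentMap

theorem stmt7 {n : ℕ} (hn : 1 ≤ n) (w u : Equiv.Perm (Fin n)) (hle : BruhatLE u w) :
    ∃ F : (Fin n → ℝ) →ₗ[ℝ] ℝ,
      (∀ p ∈ Eplus w u, F (mu (Equiv.swap p.1 p.2 * u)) = F (mu u)) ∧
      (∀ p ∈ Eminus w u, F (mu u) < F (mu (Equiv.swap p.1 p.2 * u))) ∧
      (∀ p ∈ Eplus w u, F (stdB p.1 - stdB p.2) = 0) ∧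
      (∀ p ∈ Eminus w u, 0 < F (stdB p.1 - stdB p.2)) := by
  obtain ⟨f, hplus, hminus⟩ := exists_eq_on_eplus_lt_on_eminus hle
  let F : (Fin n → ℝ) →ₗ[ℝ] ℝ := Fintype.linearCombination ℝ f
  have map_stdB (a b : Fin n) : F (stdB a - stdB b) = f a - f b := by
    simp [F, stdB_eq_single, Fintype.linearCombination_apply_single]
  have map_mu (a b : Fin n) : F (mu (swap a b * u)) - F (mu u) =
      ((u⁻¹ b : ℝ) - (u⁻¹ a : ℝ)) * (f a - f b) := by
    rw [← map_sub, mu_swap_mul_sub, map_smul, map_stdB, smul_eq_mul]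
  refine ⟨F, fun p hp => ?_, fun p hp => ?_, fun p hp => ?_, fun p hp => ?_⟩
  · rw [← sub_eq_zero, map_mu, hplus p hp, sub_self, mul_zero]
  · rw [← sub_pos, map_mu]
    exact mul_pos (sub_pos.2 (by exact_mod_cast inv_lt_inv_of_mem_etilde hp.1.1))
      (sub_pos.2 (hminus p hp))
  · rw [map_stdB, hplus p hp, sub_self]
  · rw [map_stdB]
    exact sub_pos.2 (hminus p hp)
end
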